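/- For an integer n ≥ 1, define f_n(x) = ∫_0^x sin(ns)/(2·sin(s)) ds (the integrand being extended continuously by the value n/2 at s = 0). Then for every integer n ≥ 4 and every x ∈ [π/n, π/2], one has f_n(x) ≥ f_n(2π/n). -/

import Mathlib

open Real intervalIntegral

noncomputable def fIntitem (n : ℕ) (x : ℝ) : ℝ :=
  ∫ s in (0:ℝ)..x, Real.sin (n * s) / (2 * Real.sin s)

/-!
The argument works for any real frequency `a > 2` in place of `n`. For `0 < s < π` the integrand has
the sign of `sin (a * s)`, so it is nonpositive on `[π / a, 2 * π / a]` and the integral decreases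
there. Beyond `2 * π / a`, integrate by parts against the primitive `-cos (a * s) / a` of
`sin (a * s)`: this primitive takes its minimum at `2 * π / a`, while `1 / (2 * sin s)` is positive
and decreasing up to `π / 2`, so the integral from `2 * π / a` onwards is nonnegative.
-/

theorem integral_mul_deriv_nonneg {u u' v v' : ℝ → ℝ} {b c : ℝ} (hbc : b ≤ c)
    (hu : ∀ s ∈ Set.Icc b c, HasDerivAt u (u' s) s) (hv : ∀ s ∈ Set.Icc b c, HasDerivAt v (v' s) s)
    (hu'_int : IntervalIntegrable u' MeasureTheory.volume b c)
    (hv'_int : IntervalIntegrable v' MeasureTheory.volume b c)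
    (hu' : ∀ s ∈ Set.Icc b c, u' s ≤ 0) (huc : 0 ≤ u c) (hvb : IsMinOn v (Set.Icc b c) b) :
    0 ≤ ∫ s in b..c, u s * v' s := by
  rw [← Set.uIcc_of_le hbc] at hu hv
  have by_parts : ∫ s in b..c, u s * v' s
      = u c * (v c - v b) - ∫ s in b..c, u' s * (v s - v b) := by
    simpa using integral_mul_deriv_eq_deriv_mul hu (fun s hs ↦ (hv s hs).sub_const (v b))
      hu'_int hv'_int
  have boundary_nonneg : 0 ≤ u c * (v c - v b) :=
    mul_nonneg huc (sub_nonneg.2 (hvb (Set.right_mem_Icc.2 hbc)))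
  have remainder_nonpos : ∫ s in b..c, u' s * (v s - v b) ≤ 0 := by
    rw [← neg_nonneg, ← integral_neg]
    exact integral_nonneg hbc fun s hs ↦
      neg_nonneg.2 (mul_nonpos_of_nonpos_of_nonneg (hu' s hs) (sub_nonneg.2 (hvb hs)))
  linarith

theorem sin_nonpos_of_pi_le_of_le_two_pi {t : ℝ} (h₁ : π ≤ t) (h₂ : t ≤ 2 * π) : sin t ≤ 0 := by
  rw [← sin_sub_two_pi]
  exact sin_nonpos_of_nonpos_of_neg_pi_le (by linarith) (by linarith)

theorem sinc_pos_of_abs_lt_pi {t : ℝ} (ht : |t| < π) : 0 < sinc t := by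
  have sinc_abs : sinc |t| = sinc t := by
    rcases abs_choice t with h | h <;> rw [h]
    exact sinc_neg t
  rw [← sinc_abs]
  rcases (abs_nonneg t).eq_or_lt with h | h
  · rw [← h, sinc_zero]
    exact one_pos
  · rw [sinc_of_ne_zero h.ne']
    exact div_pos (sin_pos_of_pos_of_lt_pi h ht) h

theorem mul_sinc (t : ℝ) : t * sinc t = sin t := by
  rcases eq_or_ne t 0 with rfl | ht
  · rw [zero_mul, sin_zero]
  · rw [sinc_of_ne_zero ht, mul_div_cancel₀ _ ht]

theorem sin_mul_div_two_mul_sin_eq_sinc (a : ℝ) {s : ℝ} (hs : s ≠ 0) :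
    sin (a * s) / (2 * sin s) = a * sinc (a * s) / (2 * sinc s) := by
  calc sin (a * s) / (2 * sin s)
      = s * (a * sinc (a * s)) / (s * (2 * sinc s)) := by
        rw [← mul_sinc (a * s), ← mul_sinc s]
        ring_nf
    _ = a * sinc (a * s) / (2 * sinc s) := mul_div_mul_left _ _ hs

theorem intervalIntegrable_sin_mul_div_two_mul_sin (a : ℝ) {c : ℝ} (hc : |c| < π) :
    IntervalIntegrable (fun s ↦ sin (a * s) / (2 * sin s)) MeasureTheory.volume 0 c := by
  have sinc_ne_zero : ∀ s ∈ Set.uIcc 0 c, 2 * sinc s ≠ 0 := fun s hs ↦ by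
    have abs_le : |s| ≤ |c| := by simpa using Set.abs_sub_left_of_mem_uIcc hs
    exact mul_ne_zero two_ne_zero (sinc_pos_of_abs_lt_pi (abs_le.trans_lt hc)).ne'
  have sinc_int : IntervalIntegrable (fun s ↦ a * sinc (a * s) / (2 * sinc s))
      MeasureTheory.volume 0 c :=
    (ContinuousOn.div (by fun_prop) (by fun_prop) sinc_ne_zero).intervalIntegrable
  refine sinc_int.congr_uIoo fun s hs ↦ (sin_mul_div_two_mul_sin_eq_sinc a ?_).symm
  rintro rfl
  exact Set.left_notMem_uIoo hs

theorem integral_sin_mul_div_two_mul_sin_nonpos {a x : ℝ} (ha : 2 ≤ a) (hx₁ : π / a ≤ x)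
    (hx₂ : x ≤ 2 * π / a) : ∫ s in x..(2 * π / a), sin (a * s) / (2 * sin s) ≤ 0 := by
  have a_pos : 0 < a := by linarith
  have x_pos : 0 < x := (div_pos pi_pos a_pos).trans_le hx₁
  have two_pi_div_le : 2 * π / a ≤ π := by
    rw [div_le_iff₀' a_pos]
    gcongr
  rw [← neg_nonneg, ← integral_neg]
  refine integral_nonneg hx₂ fun s ⟨hxs, hs⟩ ↦ neg_nonneg.2 (div_nonpos_of_nonpos_of_nonneg ?_ ?_)
  · exact sin_nonpos_of_pi_le_of_le_two_pi ((div_le_iff₀' a_pos).1 (hx₁.trans hxs))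
      ((le_div_iff₀' a_pos).1 hs)
  · exact mul_nonneg zero_le_two
      (sin_nonneg_of_nonneg_of_le_pi (x_pos.le.trans hxs) (hs.trans two_pi_div_le))

theorem integral_sin_mul_div_two_mul_sin_nonneg {a b x : ℝ} (ha : 0 < a) (hb : 0 < b)
    (hcos : cos (a * b) = 1) (hbx : b ≤ x) (hx : x ≤ π / 2) :
    0 ≤ ∫ s in b..x, sin (a * s) / (2 * sin s) := by
  have sin_pos : ∀ s ∈ Set.Icc b x, 0 < sin s := fun s hs ↦
    sin_pos_of_pos_of_lt_pi (hb.trans_le hs.1) (by linarith [hs.2, pi_pos])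
  have hasDerivAt_inv_sin : ∀ s ∈ Set.Icc b x,
      HasDerivAt (fun t ↦ (2 * sin t)⁻¹) (-(2 * cos s) / (2 * sin s) ^ 2) s := fun s hs ↦
    ((hasDerivAt_sin s).const_mul 2).fun_inv (mul_pos two_pos (sin_pos s hs)).ne'
  have hasDerivAt_cos : ∀ s, HasDerivAt (fun t ↦ -cos (a * t) / a) (sin (a * s)) s := fun s ↦ by
    simpa [mul_div_cancel_right₀ _ ha.ne'] using
      ((hasDerivAt_id' s).const_mul a).cos.neg.div_const a
  simp_rw [div_eq_inv_mul (sin _)]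
  refine integral_mul_deriv_nonneg hbx hasDerivAt_inv_sin (fun s _ ↦ hasDerivAt_cos s)
    (ContinuousOn.intervalIntegrable_of_Icc hbx ?_)
    (Continuous.intervalIntegrable (by fun_prop) _ _) ?_ ?_ ?_
  · exact ContinuousOn.div (by fun_prop) (by fun_prop) fun s hs ↦
      pow_ne_zero 2 (mul_pos two_pos (sin_pos s hs)).ne'
  · intro s hs
    have cos_nonneg : 0 ≤ cos s := cos_nonneg_of_neg_pi_div_two_le_of_le
      (by linarith [hs.1, pi_pos]) (hs.2.trans hx)
    exact div_nonpos_of_nonpos_of_nonneg (by linarith) (sq_nonneg _)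
  · exact inv_nonneg.2 (mul_pos two_pos (sin_pos x (Set.right_mem_Icc.2 hbx))).le
  · intro s _
    change -cos (a * b) / a ≤ -cos (a * s) / a
    rw [hcos]
    gcongr
    exact cos_le_one _

theorem fn_min_at_x2_general {a x : ℝ} (ha : 2 < a) (hx : x ∈ Set.Icc (π / a) (π / 2)) :
    ∫ s in 0..(2 * π / a), sin (a * s) / (2 * sin s) ≤
      ∫ s in 0..x, sin (a * s) / (2 * sin s) := by
  have a_pos : 0 < a := two_pos.trans ha
  have x_pos : 0 < x := (div_pos pi_pos a_pos).trans_le hx.1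
  have two_pi_div_pos : 0 < 2 * π / a := by positivity
  have two_pi_div_lt : 2 * π / a < π := by
    rw [div_lt_iff₀' a_pos]
    gcongr
  have x_int := intervalIntegrable_sin_mul_div_two_mul_sin a (c := x)
    (by rw [abs_of_pos x_pos]; linarith [hx.2, pi_pos])
  have two_pi_div_int := intervalIntegrable_sin_mul_div_two_mul_sin a (c := 2 * π / a)
    (by rwa [abs_of_pos two_pi_div_pos])
  rcases le_total x (2 * π / a) with h | h
  · rw [← sub_nonpos, integral_interval_sub_left two_pi_div_int x_int]
    exact integral_sin_mul_div_two_mul_sin_nonpos ha.le hx.1 h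
  · rw [← sub_nonneg, integral_interval_sub_left x_int two_pi_div_int]
    have cos_eq_one : cos (a * (2 * π / a)) = 1 := by
      rw [mul_div_cancel₀ _ a_pos.ne', cos_two_pi]
    exact integral_sin_mul_div_two_mul_sin_nonneg a_pos two_pi_div_pos cos_eq_one h hx.2

theorem fn_min_at_x2 (n : ℕ) (hn : 4 ≤ n)
    (x : ℝ) (hx : x ∈ Set.Icc (Real.pi / n) (Real.pi / 2)) :
    fIntitem n x ≥ fIntitem n (2 * Real.pi / n) :=
  fn_min_at_x2_general (by exact_mod_cast (show 2 < n by lia)) hx
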